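/- arXiv:1205.2987 — 4 statements merged into one kernel-verified Lean document; each statement's English description precedes it below -/
import Mathlib

section
/- Let (X, 𝒜, μ) be a measure space, U an open subset of ℂ, and f : X × U → ℂ a function such that: (1) for every z ∈ U the function t ↦ f(t,z) is measurable; (2) for every t ∈ X the function z ↦ f(t,z) is holomorphic on U; (3) there exists a subset E ⊆ U, discrete in U, such that for every compact subset K ⊆ U ∖ E there is an integrable function g_K ∈ L¹(μ) with |f(t,z)| ≤ g_K(t) for all (t,z) ∈ X × K. Then for every z ∈ U (including the points of E) the integral ∫_X f(t,z) dμ(t) is absolutely convergent, and the function z ↦ ∫_X f(t,z) dμ(t) is holomorphic on all of U. -/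
open MeasureTheory

/-!
A discrete set `E` is countable, so only countably many circles around a given point meet it, and
every point of `U` is the center of a small disc in `U` whose boundary circle avoids `E`. The
integrable bound on that circle extends to the disc by the maximum modulus principle, even at points
of `E`. Cauchy's estimate then dominates the derivatives on a smaller disc, and one can
differentiate under the integral sign.
-/

open Filter Metric Set Topology

lemma isDiscrete_of_forall_exists_inter_subsingleton {α : Type*} [TopologicalSpace α] {s : Set α}
    (hs : ∀ x ∈ s, ∃ V ∈ 𝓝 x, (V ∩ s).Subsingleton) : IsDiscrete s := by
  refine .of_nhdsWithin fun x hx => le_pure_iff.2 ?_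
  obtain ⟨V, hV, hVs⟩ := hs x hx
  rw [← hVs.eq_singleton_of_mem ⟨mem_of_mem_nhds hV, hx⟩]
  exact inter_mem (mem_nhdsWithin_of_mem_nhds hV) self_mem_nhdsWithin

lemma exists_closedBall_subset_disjoint_sphere_of_countable {α : Type*} [PseudoMetricSpace α]
    {s U : Set α} {x : α} (hs : s.Countable) (hU : U ∈ 𝓝 x) :
    ∃ r > 0, closedBall x r ⊆ U ∧ Disjoint (sphere x r) s := by
  obtain ⟨R, hR, hRU⟩ := nhds_basis_closedBall.mem_iff.1 hU
  obtain ⟨r, hr_avoids, hr, hrR⟩ := ((hs.image (dist · x)).dense_compl ℝ).exists_between hR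
  exact ⟨r, hr, (closedBall_subset_closedBall hrR.le).trans hRU,
    disjoint_left.2 fun y hy hys => hr_avoids ⟨y, hys, hy⟩⟩

section Holomorphic

variable {F : Type*} [NormedAddCommGroup F] [NormedSpace ℂ F]

lemma norm_le_of_forall_mem_sphere_norm_le {E : Type*} [NormedAddCommGroup E] [NormedSpace ℂ E]
    [Nontrivial E] {f : E → F} {c : E} {r C : ℝ} (hr : r ≠ 0)
    (hf : DiffContOnCl ℂ f (ball c r)) (hC : ∀ w ∈ sphere c r, ‖f w‖ ≤ C) {w : E}
    (hw : w ∈ closedBall c r) : ‖f w‖ ≤ C := by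
  rw [← frontier_ball c hr] at hC
  rw [← closure_ball c hr] at hw
  exact Complex.norm_le_of_forall_mem_frontier_norm_le isBounded_ball hf hC hw

lemma norm_deriv_le_div_sub_of_mem_ball {f : ℂ → F} {c w : ℂ} {r R C : ℝ} (hrR : r < R)
    (hf : DifferentiableOn ℂ f (closedBall c R)) (hC : ∀ v ∈ closedBall c R, ‖f v‖ ≤ C)
    (hw : w ∈ ball c r) : ‖deriv f w‖ ≤ C / (R - r) := by
  have hsub : closedBall w (R - r) ⊆ closedBall c R :=
    closedBall_subset_closedBall' (by linarith [mem_ball.1 hw])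
  exact Complex.norm_deriv_le_of_forall_mem_sphere_norm_le (sub_pos.2 hrR)
    (hf.diffContOnCl_ball hsub) fun v hv => hC v (hsub (sphere_subset_closedBall hv))

end Holomorphic

section ParametricIntegral

variable {X F : Type*} [MeasurableSpace X] {μ : Measure X} [NormedAddCommGroup F]

lemma aestronglyMeasurable_of_ae_hasDerivAt {𝕜 : Type*} [NontriviallyNormedField 𝕜]
    [NormedSpace 𝕜 F] {f : X → 𝕜 → F} {f' : X → F} {z : 𝕜}
    (hmeas : ∀ᶠ w in 𝓝 z, AEStronglyMeasurable (fun t => f t w) μ)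
    (hf : ∀ᵐ t ∂μ, HasDerivAt (f t) (f' t) z) : AEStronglyMeasurable f' μ := by
  have hmeas_punctured : ∀ᶠ w in 𝓝[≠] z, AEStronglyMeasurable (fun t => f t w) μ :=
    hmeas.filter_mono nhdsWithin_le_nhds
  obtain ⟨w, hw, hw_meas⟩ := exists_seq_forall_of_frequently hmeas_punctured.frequently
  refine aestronglyMeasurable_of_tendsto_ae atTop (f := fun n t => slope (f t) z (w n))
    (fun n => ((hw_meas n).sub hmeas.self_of_nhds).const_smul (w n - z)⁻¹) ?_
  filter_upwards [hf] with t ht using (hasDerivAt_iff_tendsto_slope.1 ht).comp hw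

variable [NormedSpace ℂ F] {f : X → ℂ → F} {g : X → ℝ} {z : ℂ}

lemma hasDerivAt_integral_of_dominated_loc_of_differentiableOn {s : Set ℂ} (hs : s ∈ 𝓝 z)
    (hmeas : ∀ᶠ w in 𝓝 z, AEStronglyMeasurable (fun t => f t w) μ)
    (hf : ∀ᵐ t ∂μ, DifferentiableOn ℂ (f t) s) (hg : Integrable g μ)
    (hfg : ∀ᵐ t ∂μ, ∀ w ∈ s, ‖f t w‖ ≤ g t) :
    HasDerivAt (fun w => ∫ t, f t w ∂μ) (∫ t, deriv (f t) z ∂μ) z := by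
  obtain ⟨R, hR, hRs⟩ := nhds_basis_closedBall.mem_iff.1 hs
  have hint : Integrable (fun t => f t z) μ :=
    hg.mono' hmeas.self_of_nhds (hfg.mono fun t ht => ht z (mem_of_mem_nhds hs))
  have hderiv : ∀ᵐ t ∂μ, ∀ w ∈ ball z (R / 2), HasDerivAt (f t) (deriv (f t) w) w := by
    filter_upwards [hf] with t ht w hw
    have hws : s ∈ 𝓝 w := mem_of_superset
      (isOpen_ball.mem_nhds (ball_subset_ball (half_le_self hR.le) hw))
      (ball_subset_closedBall.trans hRs)
    exact (ht.differentiableAt hws).hasDerivAt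
  have hderiv_le : ∀ᵐ t ∂μ, ∀ w ∈ ball z (R / 2), ‖deriv (f t) w‖ ≤ g t / (R - R / 2) := by
    filter_upwards [hf, hfg] with t ht htg w hw
    exact norm_deriv_le_div_sub_of_mem_ball (half_lt_self hR) (ht.mono hRs)
      (fun v hv => htg v (hRs hv)) hw
  have hderiv_meas : AEStronglyMeasurable (fun t => deriv (f t) z) μ :=
    aestronglyMeasurable_of_ae_hasDerivAt hmeas
      (hderiv.mono fun t ht => ht z (mem_ball_self (half_pos hR)))
  exact (hasDerivAt_integral_of_dominated_loc_of_deriv_le (F := fun w t => f t w)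
    (F' := fun w t => deriv (f t) w) (ball_mem_nhds z (half_pos hR)) hmeas hint hderiv_meas
    hderiv_le (hg.div_const _) hderiv).2

lemma integrable_and_differentiableAt_integral_of_dominated_sphere {r : ℝ} (hr : 0 < r)
    (hmeas : ∀ᶠ w in 𝓝 z, AEStronglyMeasurable (fun t => f t w) μ)
    (hf : ∀ᵐ t ∂μ, DifferentiableOn ℂ (f t) (closedBall z r)) (hg : Integrable g μ)
    (hfg : ∀ᵐ t ∂μ, ∀ w ∈ sphere z r, ‖f t w‖ ≤ g t) :
    Integrable (fun t => f t z) μ ∧ DifferentiableAt ℂ (fun w => ∫ t, f t w ∂μ) z := by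
  have hfg_disc : ∀ᵐ t ∂μ, ∀ w ∈ closedBall z r, ‖f t w‖ ≤ g t := by
    filter_upwards [hf, hfg] with t ht htg w hw
    exact norm_le_of_forall_mem_sphere_norm_le hr.ne' (ht.diffContOnCl_ball subset_rfl) htg hw
  exact ⟨hg.mono' hmeas.self_of_nhds (hfg_disc.mono fun t ht => ht z (mem_closedBall_self hr.le)),
    (hasDerivAt_integral_of_dominated_loc_of_differentiableOn (closedBall_mem_nhds z hr) hmeas hf
      hg hfg_disc).differentiableAt⟩

end ParametricIntegral

theorem stmt_0_general {X F : Type*} [MeasurableSpace X] [NormedAddCommGroup F] [NormedSpace ℂ F]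
    [CompleteSpace F] {μ : Measure X} {U E : Set ℂ} (hU : IsOpen U) (hE : E.Countable)
    {f : X → ℂ → F} (hmeas : ∀ z ∈ U, AEStronglyMeasurable (fun t => f t z) μ)
    (hholo : ∀ᵐ t ∂μ, DifferentiableOn ℂ (f t) U)
    (hdom : ∀ K ⊆ U \ E, IsCompact K →
      ∃ g : X → ℝ, Integrable g μ ∧ ∀ᵐ t ∂μ, ∀ z ∈ K, ‖f t z‖ ≤ g t) :
    (∀ z ∈ U, Integrable (fun t => f t z) μ) ∧
      DifferentiableOn ℂ (fun z => ∫ t, f t z ∂μ) U := by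
  have hlocal : ∀ z ∈ U, Integrable (fun t => f t z) μ ∧
      DifferentiableAt ℂ (fun w => ∫ t, f t w ∂μ) z := by
    intro z hz
    obtain ⟨r, hr, hrU, hrE⟩ :=
      exists_closedBall_subset_disjoint_sphere_of_countable hE (hU.mem_nhds hz)
    obtain ⟨g, hg, hfg⟩ := hdom (sphere z r)
      (subset_sdiff.2 ⟨sphere_subset_closedBall.trans hrU, hrE⟩) (isCompact_sphere z r)
    exact integrable_and_differentiableAt_integral_of_dominated_sphere hr
      (eventually_of_mem (hU.mem_nhds hz) hmeas) (hholo.mono fun t ht => ht.mono hrU) hg hfg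
  exact ⟨fun z hz => (hlocal z hz).1, fun z hz => (hlocal z hz).2.differentiableWithinAt⟩

/-- Holomorphy of a parametric integral dominated off a discrete set. -/
theorem stmt_0 {X : Type*} [MeasurableSpace X] (μ : Measure X)
    (U : Set ℂ) (hU : IsOpen U) (f : X → ℂ → ℂ)
    (hmeas : ∀ z ∈ U, Measurable fun t => f t z)
    (hholo : ∀ t : X, DifferentiableOn ℂ (f t) U)
    (hdom : ∃ E : Set ℂ, E ⊆ U ∧
      (∀ z ∈ U, ∃ V ∈ nhds z, (V ∩ E).Subsingleton) ∧
      ∀ K : Set ℂ, K ⊆ U \ E → IsCompact K →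
        ∃ g : X → ℝ, Integrable g μ ∧ ∀ t : X, ∀ z ∈ K, ‖f t z‖ ≤ g t) :
    (∀ z ∈ U, Integrable (fun t => f t z) μ) ∧
      DifferentiableOn ℂ (fun z => ∫ t, f t z ∂μ) U := by
  obtain ⟨E, hEU, hE, hdom⟩ := hdom
  have hE_countable : E.Countable :=
    (HereditarilyLindelofSpace.isLindelof E).countable_of_isDiscrete
      (isDiscrete_of_forall_exists_inter_subsingleton fun z hz => hE z (hEU hz))
  exact stmt_0_general hU hE_countable (fun z hz => (hmeas z hz).aestronglyMeasurable)
    (.of_forall hholo) fun K hK hKc => (hdom K hK hKc).imp fun _ hg => hg.imp_right .of_forall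
end

section
/- For all v', v'' ∈ V the endomorphism c(v',v'') is skew-hermitian, i.e. belongs to 𝔲(V,h), and the elements c(v',v''), for v', v'' ranging over V, span 𝔲(V,h) as an F-vector space. -/
/-!
Call `X : V → V` of rank one if it has the form `h(·, a) y`; its adjoint is `h(·, y) a`, and
`c(a, y)` is the difference of the two. By nondegeneracy every functional is some `h(·, a)`, so
every endomorphism is a sum of rank-one ones. Summing, every endomorphism `A` has an adjoint `A*`,
and `A - A*` is in the span of the `c(a, y)`. If `X` is skew-hermitian then `X - X* = 2 X`.
-/

open Function

section LinearAlgebra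

theorem induction_on_smulRight {R M N : Type*} [CommRing R] [AddCommGroup M] [Module R M]
    [Module.Finite R M] [Module.Projective R M] [AddCommGroup N] [Module R N]
    {p : (M →ₗ[R] N) → Prop} (add : ∀ A B, p A → p B → p (A + B))
    (smulRight : ∀ (f : Module.Dual R M) (y : N), p (f.smulRight y)) (A : M →ₗ[R] N) : p A := by
  obtain ⟨t, rfl⟩ := (dualTensorHom_bijective (R := R) (M := M) (N := N)).surjective A
  induction t with
  | zero => simpa only [map_zero, LinearMap.smulRight_zero] using smulRight 0 0
  | tmul f y => exact smulRight f y
  | add s t hs ht => simpa only [map_add] using add _ _ hs ht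

variable {R M M' N : Type*} [CommRing R] {σ : R →+* R} [AddCommGroup M] [Module R M]
  [AddCommGroup M'] [Module R M'] [AddCommGroup N] [Module R N]

theorem isAdjointPair_left_unique {B : M →ₗ[R] M →ₛₗ[σ] N} {B' : M' →ₗ[R] M' →ₛₗ[σ] N}
    (hB' : B'.SeparatingLeft) {f f' : M → M'} {g : M' → M}
    (h : LinearMap.IsAdjointPair B B' f g) (h' : LinearMap.IsAdjointPair B B' f' g) : f = f' := by
  funext x
  refine sub_eq_zero.1 (hB' _ fun y => ?_)
  rw [map_sub, LinearMap.sub_apply, h, h', sub_self]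

theorem separatingLeft_of_surjective_flip [Module.Projective R M] {B : M →ₗ[R] M' →ₛₗ[σ] R}
    (hB : Surjective B.flip) : B.SeparatingLeft := by
  refine fun x hx => (Module.forall_dual_apply_eq_zero_iff R x).1 fun f => ?_
  obtain ⟨a, rfl⟩ := hB f
  exact hx a

theorem surjective_flip_of_separatingLeft {K V W : Type*} [Field K] {σ : K →+* K}
    [RingHomSurjective σ] [AddCommGroup V] [Module K V] [FiniteDimensional K V]
    [AddCommGroup W] [Module K W] {B : V →ₗ[K] W →ₛₗ[σ] K} (hB : B.SeparatingLeft) :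
    Surjective B.flip := by
  have hco : (LinearMap.range B.flip).dualCoannihilator = ⊥ := by
    refine (Submodule.eq_bot_iff _).2 fun x hx => hB x fun y => ?_
    exact (Submodule.mem_dualCoannihilator x).1 hx _ (LinearMap.mem_range_self B.flip y)
  rw [← LinearMap.range_eq_top,
    ← Subspace.dualCoannihilator_dualAnnihilator_eq (W := LinearMap.range B.flip), hco,
    Submodule.dualAnnihilator_bot]

end LinearAlgebra

section SesquilinearForm

variable {E V : Type*} [CommRing E] [AddCommGroup V] [Module E V] {σ : E →+* E}

/-- Hermitian forms with respect to `σ`, in the convention that forms are linear in the first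
variable, as in `LinearMap.IsAdjointPair`; `LinearMap.IsSymm` has the semilinear variable first. -/
def IsHermitianForm (B : V →ₗ[E] V →ₛₗ[σ] E) : Prop :=
  ∀ u v, B v u = σ (B u v)

/-- The rank-one endomorphism `u ↦ B u a • y`. -/
def sesqRankOne (B : V →ₗ[E] V →ₛₗ[σ] E) (a y : V) : V →ₗ[E] V :=
  (B.flip a).smulRight y

/-- The endomorphism `c(v', v'')`, which is `u ↦ B u v' • v'' - B u v'' • v'`. -/
def sesqWedge (B : V →ₗ[E] V →ₛₗ[σ] E) (v' v'' : V) : V →ₗ[E] V :=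
  sesqRankOne B v' v'' - sesqRankOne B v'' v'

theorem sesqRankOne_apply (B : V →ₗ[E] V →ₛₗ[σ] E) (a y u : V) :
    sesqRankOne B a y u = B u a • y :=
  rfl

theorem sesqWedge_apply (B : V →ₗ[E] V →ₛₗ[σ] E) (v' v'' u : V) :
    sesqWedge B v' v'' u = B u v' • v'' - B u v'' • v' :=
  rfl

theorem IsHermitianForm.isAdjointPair_sesqRankOne {B : V →ₗ[E] V →ₛₗ[σ] E}
    (hB : IsHermitianForm B) (a y : V) :
    LinearMap.IsAdjointPair B B (sesqRankOne B a y) (sesqRankOne B y a) := fun u v => by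
  simp only [sesqRankOne_apply, map_smul, map_smulₛₗ, LinearMap.smul_apply, smul_eq_mul, ← hB v y,
    mul_comm]

end SesquilinearForm

section SkewHermitian

variable (F : Type*) {E V : Type*} [CommRing F] [CommRing E] [Algebra F E] [AddCommGroup V]
  [Module E V] [Module F V] [IsScalarTower F E V] {σ : E ≃ₐ[F] E}

/-- The `F`-module `𝔲(V, B)` of skew-hermitian endomorphisms. It is not an `E`-module in
general: the condition on `X` is preserved only by scalars fixed by `σ`. -/
def skewHermitian (B : V →ₗ[E] V →ₛₗ[(σ : E →+* E)] E) : Submodule F (V →ₗ[E] V) where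
  carrier := {X | ∀ u v, B (X u) v + B u (X v) = 0}
  zero_mem' u v := by simp
  add_mem' {X Y} hX hY u v := by
    simp only [LinearMap.add_apply, map_add]
    linear_combination hX u v + hY u v
  smul_mem' r X hX u v := by
    have hr : B u (r • X v) = r • B u (X v) := by
      rw [← algebraMap_smul E r (X v), map_smulₛₗ, RingHom.coe_coe, σ.commutes, algebraMap_smul]
    rw [LinearMap.smul_apply, LinearMap.smul_apply, hr, ← algebraMap_smul E r (X u), map_smul,
      LinearMap.smul_apply, algebraMap_smul, ← smul_add, hX, smul_zero]

variable {F} {B : V →ₗ[E] V →ₛₗ[(σ : E →+* E)] E}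

theorem isAdjointPair_neg_of_mem_skewHermitian {X : V →ₗ[E] V} (hX : X ∈ skewHermitian F B) :
    LinearMap.IsAdjointPair B B (-X : V →ₗ[E] V) X := fun u v => by
  rw [LinearMap.neg_apply, map_neg, LinearMap.neg_apply, neg_eq_iff_add_eq_zero, hX u v]

theorem IsHermitianForm.sesqWedge_mem_skewHermitian (hB : IsHermitianForm B) (v' v'' : V) :
    sesqWedge B v' v'' ∈ skewHermitian F B := fun u v => by
  simp only [sesqWedge, LinearMap.sub_apply, map_sub, hB.isAdjointPair_sesqRankOne _ _ u v]
  ring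

theorem IsHermitianForm.exists_isAdjointPair_sub_mem_span_sesqWedge [Module.Finite E V]
    [Module.Projective E V] (hB : IsHermitianForm B) (hsurj : Surjective B.flip) (A : V →ₗ[E] V) :
    ∃ A' : V →ₗ[E] V, LinearMap.IsAdjointPair B B A' A ∧
      A - A' ∈ Submodule.span F (Set.range fun p : V × V => sesqWedge B p.1 p.2) := by
  induction A using induction_on_smulRight with
  | add A₁ A₂ h₁ h₂ =>
    obtain ⟨A₁', hadj₁, hmem₁⟩ := h₁
    obtain ⟨A₂', hadj₂, hmem₂⟩ := h₂
    exact ⟨A₁' + A₂', hadj₁.add hadj₂, by simpa only [add_sub_add_comm] using add_mem hmem₁ hmem₂⟩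
  | smulRight f y =>
    obtain ⟨a, rfl⟩ := hsurj f
    exact ⟨sesqRankOne B y a, hB.isAdjointPair_sesqRankOne y a, Submodule.subset_span ⟨(a, y), rfl⟩⟩

theorem IsHermitianForm.span_sesqWedge_eq_skewHermitian [Module.Finite E V]
    [Module.Projective E V] (h2 : IsUnit (2 : F)) (hB : IsHermitianForm B)
    (hsurj : Surjective B.flip) :
    Submodule.span F (Set.range fun p : V × V => sesqWedge B p.1 p.2) = skewHermitian F B := by
  refine le_antisymm (Submodule.span_le.2 ?_) fun X hX => ?_
  · rintro _ ⟨p, rfl⟩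
    exact hB.sesqWedge_mem_skewHermitian p.1 p.2
  · obtain ⟨X', hadj, hmem⟩ := hB.exists_isAdjointPair_sub_mem_span_sesqWedge (F := F) hsurj X
    have hX' : X' = -X := DFunLike.coe_injective <| isAdjointPair_left_unique
      (separatingLeft_of_surjective_flip hsurj) hadj (isAdjointPair_neg_of_mem_skewHermitian hX)
    rw [hX', sub_neg_eq_add, ← two_smul F X] at hmem
    exact (Submodule.smul_mem_iff_of_isUnit _ h2).1 hmem

end SkewHermitian

/-- The form bundling a function `hm` that is linear in the first variable and hermitian; the
remaining laws follow by conjugation. -/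
def hermitianFormOfConj {E V : Type*} [CommRing E] [AddCommGroup V] [Module E V] (σ : E →+* E)
    (hm : V → V → E) (haddl : ∀ u u' v : V, hm (u + u') v = hm u v + hm u' v)
    (hsmull : ∀ (a : E) (u v : V), hm (a • u) v = a * hm u v)
    (hconj : ∀ u v : V, hm v u = σ (hm u v)) : V →ₗ[E] V →ₛₗ[σ] E :=
  LinearMap.mk₂'ₛₗ (RingHom.id E) σ hm haddl hsmull
    (fun u v v' => by rw [hconj _ u, haddl, map_add, ← hconj, ← hconj])
    (fun a u v => by rw [hconj _ u, hsmull, map_mul, ← hconj, smul_eq_mul])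

theorem stmt_1_general (F E : Type*) [CommRing F] (h2 : IsUnit (2 : F)) [Field E] [Algebra F E]
    (σ : E ≃ₐ[F] E)
    (V : Type*) [AddCommGroup V] [Module E V] [Module F V] [IsScalarTower F E V]
    [FiniteDimensional E V]
    (hm : V → V → E)
    (haddl : ∀ u u' v : V, hm (u + u') v = hm u v + hm u' v)
    (hsmull : ∀ (a : E) (u v : V), hm (a • u) v = a * hm u v)
    (hconj : ∀ u v : V, hm v u = σ (hm u v))
    (hnd : ∀ u : V, (∀ v : V, hm u v = 0) → u = 0)
    (c : V → V → V →ₗ[E] V)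
    (hc : ∀ v' v'' v : V, c v' v'' v = hm v v' • v'' - hm v v'' • v') :
    (∀ v' v'' u v : V, hm (c v' v'' u) v + hm u (c v' v'' v) = 0) ∧
    (Submodule.span F (Set.range fun p : V × V => c p.1 p.2) : Set (V →ₗ[E] V)) =
      {X : V →ₗ[E] V | ∀ u v : V, hm (X u) v + hm u (X v) = 0} := by
  let B := hermitianFormOfConj (σ : E →+* E) hm haddl hsmull hconj
  have hB : IsHermitianForm B := hconj
  have : RingHomSurjective (σ : E →+* E) := ⟨σ.surjective⟩
  have hsurj : Surjective B.flip := surjective_flip_of_separatingLeft hnd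
  obtain rfl : c = sesqWedge B := by
    ext v' v'' v
    rw [hc, sesqWedge_apply]
    rfl
  exact ⟨hB.sesqWedge_mem_skewHermitian (F := F),
    congrArg SetLike.coe (hB.span_sesqWedge_eq_skewHermitian h2 hsurj)⟩

/-- the maps `c(v',v'')` are skew-hermitian and span the unitary Lie
algebra `𝔲(V,h)` as an `F`-vector space. -/
theorem stmt_1 (F E : Type*) [Field F] [CharZero F] [Field E] [Algebra F E]
    (hquad : Module.finrank F E = 2)
    (σ : E ≃ₐ[F] E) (hσnt : ∃ x : E, σ x ≠ x)
    (V : Type*) [AddCommGroup V] [Module E V] [Module F V] [IsScalarTower F E V]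
    [FiniteDimensional E V]
    (hm : V → V → E)
    (haddl : ∀ u u' v : V, hm (u + u') v = hm u v + hm u' v)
    (hsmull : ∀ (a : E) (u v : V), hm (a • u) v = a * hm u v)
    (hconj : ∀ u v : V, hm v u = σ (hm u v))
    (hnd : ∀ u : V, (∀ v : V, hm u v = 0) → u = 0)
    (c : V → V → V →ₗ[E] V)
    (hc : ∀ v' v'' v : V, c v' v'' v = hm v v' • v'' - hm v v'' • v') :
    (∀ v' v'' u v : V, hm (c v' v'' u) v + hm u (c v' v'' v) = 0) ∧
    (Submodule.span F (Set.range fun p : V × V => c p.1 p.2) : Set (V →ₗ[E] V)) =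
      {X : V →ₗ[E] V | ∀ u v : V, hm (X u) v + hm u (X v) = 0} := by
  exact stmt_1_general F E (IsUnit.mk0 2 two_ne_zero) σ V hm haddl hsmull hconj hnd c hc
end

section
/- Let r ≥ 0 and d ≥ 0 be integers and let R ∈ E[T] be a monic polynomial of degree d with R(0) ≠ 0. Then the 2r + d + 2 polynomials T^{2r}·D^i(R) for i = 1,…,d, together with T^j·R for j = 0,…,2r+1, form a basis of the E-vector space of polynomials of degree at most 2r + d + 1. -/
/-!
Since `R(0)` is a unit, `T` is invertible modulo `R`. Hence Bézout followed by division by `R`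
writes every polynomial of degree `< n + d` as `T ^ m * a + R * b` with `a` of degree `< d` and,
when `m ≤ n`, with `b` of degree `< n`. The iterates `D^i R` with `1 ≤ i ≤ d` have the leading
coefficient of `R` and take each degree `< d` once, so they span the possible `a`, while the powers
of `T` span the possible `b`. The family therefore spans, and a spanning family with as many members
as the rank is linearly independent over any commutative ring.
-/

open Polynomial

theorem span_range_mul {ι A B : Type*} [CommSemiring A] [Semiring B] [Algebra A B]
    (p : B) (v : ι → B) :
    Submodule.span A (Set.range fun i => p * v i) =
      (Submodule.span A (Set.range v)).map (LinearMap.mulLeft A p) := by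
  rw [Submodule.map_span, ← Set.range_comp]
  rfl

section Semiring

variable {A : Type*} [Semiring A]

theorem coeff_iterate_divX (p : A[X]) (n k : ℕ) : (divX^[n] p).coeff k = p.coeff (k + n) := by
  induction n generalizing k with
  | zero => rfl
  | succ n ih => rw [Function.iterate_succ_apply', coeff_divX, ih, add_right_comm, add_assoc]

theorem natDegree_iterate_divX (p : A[X]) (n : ℕ) :
    (divX^[n] p).natDegree = p.natDegree - n := by
  induction n with
  | zero => rfl
  | succ n ih =>
    rw [Function.iterate_succ_apply', natDegree_divX_eq_natDegree_tsub_one, ih, Nat.sub_sub]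

theorem leadingCoeff_iterate_divX {p : A[X]} {n : ℕ} (hn : n ≤ p.natDegree) :
    (divX^[n] p).leadingCoeff = p.leadingCoeff := by
  rw [leadingCoeff, natDegree_iterate_divX, coeff_iterate_divX, Nat.sub_add_cancel hn,
    coeff_natDegree]

theorem mem_degreeLT_of_natDegree_lt {p : A[X]} {n : ℕ} (hp : p.natDegree < n) :
    p ∈ degreeLT A n :=
  mem_degreeLT.2 (degree_le_natDegree.trans_lt (Nat.cast_lt.2 hp))

theorem mul_mem_degreeLT {p a : A[X]} {m n : ℕ} (hp : p.natDegree ≤ m) (ha : a ∈ degreeLT A n) :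
    p * a ∈ degreeLT A (m + n) := by
  obtain rfl | ha0 := eq_or_ne a 0
  · rw [mul_zero]
    exact zero_mem _
  · have ha_deg : a.natDegree < n := (natDegree_lt_iff_degree_lt ha0).2 (mem_degreeLT.1 ha)
    exact mem_degreeLT_of_natDegree_lt
      (natDegree_mul_le.trans_lt (add_lt_add_of_le_of_lt hp ha_deg))

theorem mem_degreeLT_of_mul_mem_degreeLT {q b : A[X]} {n : ℕ} (hq : IsUnit q.leadingCoeff)
    (h : q * b ∈ degreeLT A (n + q.natDegree)) : b ∈ degreeLT A n := by
  obtain rfl | hb := eq_or_ne b 0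
  · exact zero_mem _
  have hqb : q.leadingCoeff * b.leadingCoeff ≠ 0 :=
    hq.mul_right_eq_zero.not.2 (leadingCoeff_ne_zero.2 hb)
  have hqb_ne : q * b ≠ 0 := leadingCoeff_ne_zero.1 (leadingCoeff_mul' hqb ▸ hqb)
  have hqb_deg : (q * b).natDegree < n + q.natDegree :=
    (natDegree_lt_iff_degree_lt hqb_ne).2 (mem_degreeLT.1 h)
  rw [natDegree_mul' hqb] at hqb_deg
  exact mem_degreeLT_of_natDegree_lt (by omega)

theorem span_range_X_pow_eq_degreeLT (n : ℕ) :
    Submodule.span A (Set.range fun j : Fin n => (X : A[X]) ^ (j : ℕ)) = degreeLT A n := by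
  classical
  rw [degreeLT_eq_span_X_pow, Finset.coe_image, Finset.coe_range, ← Fin.range_val, ← Set.range_comp]
  rfl

theorem linearIndependent_of_span_eq_degreeLT {ι : Type*} [Fintype ι] [OrzechProperty A]
    {v : ι → A[X]} (hv : Submodule.span A (Set.range v) = degreeLT A (Fintype.card ι)) :
    LinearIndependent A v := by
  nontriviality A
  rw [linearIndependent_iff_card_eq_finrank_span, Set.finrank, hv,
    (degreeLTEquiv A _).finrank_eq, Module.finrank_fin_fun]

end Semiring

section Ring

variable {A : Type*} [Ring A]

theorem span_range_eq_degreeLT {ι : Type*} {p : ι → A[X]} {n : ℕ}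
    (hunit : ∀ j, IsUnit (p j).leadingCoeff)
    (hdeg : Set.range (fun j => (p j).natDegree) = Set.Iio n) :
    Submodule.span A (Set.range p) = degreeLT A n := by
  nontriviality A
  refine le_antisymm (Submodule.span_le.2 ?_) ?_
  · rintro _ ⟨j, rfl⟩
    exact mem_degreeLT_of_natDegree_lt (hdeg.subset ⟨j, rfl⟩)
  · have hex (i : ℕ) : ∃ q : A[X], q.degree = i ∧ (i < n → q ∈ Set.range p) := by
      by_cases hi : i < n
      · obtain ⟨j, rfl⟩ := hdeg.superset hi
        have hpj : p j ≠ 0 := leadingCoeff_ne_zero.1 (hunit j).ne_zero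
        exact ⟨p j, degree_eq_natDegree hpj, fun _ => ⟨j, rfl⟩⟩
      · exact ⟨X ^ i, degree_X_pow i, fun h => absurd h hi⟩
    choose q hq_deg hq_mem using hex
    let S : Polynomial.Sequence A := ⟨q, hq_deg⟩
    have hS_unit (i : ℕ) (hi : i < n) : IsUnit (S i).leadingCoeff := by
      obtain ⟨j, hj⟩ : S i ∈ Set.range p := hq_mem i hi
      exact hj ▸ hunit j
    rw [← S.span_degreeLT hS_unit]
    exact Submodule.span_mono (Set.image_subset_iff.2 hq_mem)

theorem span_range_iterate_divX_eq_degreeLT {p : A[X]} (hp : IsUnit p.leadingCoeff) :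
    Submodule.span A (Set.range fun i : Fin p.natDegree => divX^[(i : ℕ) + 1] p) =
      degreeLT A p.natDegree := by
  refine span_range_eq_degreeLT (fun i => ?_) ?_
  · rwa [leadingCoeff_iterate_divX i.isLt]
  · ext k
    simp only [natDegree_iterate_divX, Set.mem_range, Set.mem_Iio]
    refine ⟨fun ⟨i, hi⟩ => by omega, fun hk => ⟨⟨p.natDegree - 1 - k, by omega⟩, ?_⟩⟩
    dsimp only
    omega

theorem exists_eq_mul_add_mem_degreeLT {q : A[X]} (hq : IsUnit q.leadingCoeff) (f : A[X]) :
    ∃ b, ∃ a ∈ degreeLT A q.natDegree, f = q * b + a := by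
  nontriviality A
  let c : A[X] := C ↑hq.unit⁻¹
  have hmonic : (q * c).Monic := monic_mul_C_of_leadingCoeff_mul_eq_one hq.mul_val_inv
  refine ⟨c * (f /ₘ (q * c)), f %ₘ (q * c), mem_degreeLT.2 ?_, ?_⟩
  · calc (f %ₘ (q * c)).degree < (q * c).degree := degree_modByMonic_lt f hmonic
      _ ≤ q.natDegree := natDegree_le_iff_degree_le.1 (natDegree_mul_C_le q _)
  · rw [← mul_assoc, add_comm, modByMonic_add_div]

end Ring

section CommRing

variable {A : Type*} [CommRing A]

theorem isCoprime_X_of_isUnit_coeff_zero {p : A[X]} (hp : IsUnit (p.coeff 0)) :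
    IsCoprime X p := by
  have hC : IsCoprime X (C (p.coeff 0)) :=
    isCoprime_one_right.of_isCoprime_of_dvd_right (hp.map C).dvd
  rw [← X_mul_divX_add p, add_comm]
  exact hC.add_mul_left_right p.divX

theorem map_mulLeft_degreeLT_sup_map_mulLeft_degreeLT {p q : A[X]} {n : ℕ} (hpq : IsCoprime p q)
    (hq : IsUnit q.leadingCoeff) (hp : p.natDegree ≤ n) :
    (degreeLT A q.natDegree).map (LinearMap.mulLeft A p) ⊔
      (degreeLT A n).map (LinearMap.mulLeft A q) = degreeLT A (n + q.natDegree) := by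
  have hpa {a : A[X]} (ha : a ∈ degreeLT A q.natDegree) : p * a ∈ degreeLT A (n + q.natDegree) :=
    mul_mem_degreeLT hp ha
  refine le_antisymm (sup_le ?_ ?_) fun f hf => ?_
  · rintro _ ⟨a, ha, rfl⟩
    exact hpa ha
  · rintro _ ⟨b, hb, rfl⟩
    exact add_comm n _ ▸ mul_mem_degreeLT le_rfl hb
  · obtain ⟨u, v, huv⟩ := hpq
    obtain ⟨c, a, ha, hfu⟩ := exists_eq_mul_add_mem_degreeLT hq (f * u)
    have hf_eq : f = p * a + q * (p * c + f * v) := by linear_combination -f * huv + p * hfu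
    have hb : p * c + f * v ∈ degreeLT A n :=
      mem_degreeLT_of_mul_mem_degreeLT hq (by
        rw [← sub_eq_of_eq_add' hf_eq]
        exact sub_mem hf (hpa ha))
    exact Submodule.mem_sup.2 ⟨_, ⟨a, ha, rfl⟩, _, ⟨_, hb, rfl⟩, hf_eq.symm⟩

end CommRing

theorem stmt_5_general {A : Type*} [CommRing A] {m n : ℕ} (hmn : m ≤ n) {R : A[X]}
    (hR : IsUnit R.leadingCoeff) (h0 : IsUnit (R.eval 0)) :
    LinearIndependent A
      (Sum.elim
        (fun i : Fin R.natDegree => X ^ m * divX^[(i : ℕ) + 1] R)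
        (fun j : Fin n => X ^ (j : ℕ) * R)) ∧
    Submodule.span A
      (Set.range
        (Sum.elim
          (fun i : Fin R.natDegree => X ^ m * divX^[(i : ℕ) + 1] R)
          (fun j : Fin n => X ^ (j : ℕ) * R))) =
      degreeLT A (n + R.natDegree) := by
  have hcop : IsCoprime (X ^ m) R :=
    (isCoprime_X_of_isUnit_coeff_zero (coeff_zero_eq_eval_zero R ▸ h0)).pow_left
  have hspan := map_mulLeft_degreeLT_sup_map_mulLeft_degreeLT hcop hR
    ((natDegree_X_pow_le m).trans hmn)
  rw [← span_range_iterate_divX_eq_degreeLT hR, ← span_range_X_pow_eq_degreeLT, ← span_range_mul,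
    ← span_range_mul, ← Submodule.span_union, ← Set.Sum.elim_range] at hspan
  simp only [mul_comm R] at hspan
  refine ⟨linearIndependent_of_span_eq_degreeLT (hspan.trans ?_), hspan⟩
  rw [Fintype.card_sum, Fintype.card_fin, Fintype.card_fin, add_comm]

/-- for a monic polynomial `R` of degree `d` with `R(0) ≠ 0`, the `2r+d+2`
polynomials `T^{2r}·D^i(R)` (for `i = 1,…,d`) and `T^j·R` (for `j = 0,…,2r+1`) form a basis
of the space of polynomials of degree at most `2r+d+1`. Here `D` is the coefficient-shift
operator, which is `Polynomial.divX`. -/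
theorem stmt_5 (E : Type*) [Field E] (r d : ℕ) (R : Polynomial E)
    (hmonic : R.Monic) (hdeg : R.natDegree = d) (h0 : Polynomial.eval 0 R ≠ 0) :
    LinearIndependent E
      (Sum.elim
        (fun i : Fin d => Polynomial.X ^ (2 * r) * (Polynomial.divX)^[(i : ℕ) + 1] R)
        (fun j : Fin (2 * r + 2) => Polynomial.X ^ (j : ℕ) * R)) ∧
    Submodule.span E
      (Set.range
        (Sum.elim
          (fun i : Fin d => Polynomial.X ^ (2 * r) * (Polynomial.divX)^[(i : ℕ) + 1] R)
          (fun j : Fin (2 * r + 2) => Polynomial.X ^ (j : ℕ) * R))) =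
      Polynomial.degreeLT E (2 * r + d + 2) := by
  subst hdeg
  rw [Nat.add_right_comm]
  exact stmt_5_general (Nat.le_add_right _ 2) (by simp [hmonic.leadingCoeff]) h0.isUnit
end

section
/- There exists a compact subset C₁ of G₀ with the following property: for all nonzero v, v' ∈ V₀ with h(v,v) = h(v',v') = ν₀ and val_{R₀}(v) = val_{R₀}(v'), there exists γ ∈ C₁ with γ(v) = v'. -/
/-! Common setup for the p-adic statements.  `E` is a nonarchimedean local field of
characteristic zero (a complete, nontrivially normed field with ultrametric norm,
compact unit ball, and discrete valuation `valE` normalized at a uniformizer `πE`),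
`σ` is an involution of `E`, and `(V₀, h)` is a hermitian space over `E` relative
to `σ`.  The unitary group `G₀` is realized inside the continuous linear
endomorphisms of `V₀`. -/

section PadSetup

variable (E : Type*) [NontriviallyNormedField E]
variable (V₀ : Type*) [NormedAddCommGroup V₀] [NormedSpace E V₀]

/-- The unitary group `G₀ = U(V₀, h)`. -/
def PadG (h : V₀ → V₀ → E) : Set (V₀ →L[E] V₀) :=
  {g | Function.Bijective (⇑g) ∧ ∀ u v : V₀, h (g u) (g v) = h u v}

/-- The subgroup `H` of `G₀` fixing `w₀` (the unitary group of `W = (Ew₀)^⊥`). -/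
def PadH (h : V₀ → V₀ → E) (w₀ : V₀) : Set (V₀ →L[E] V₀) :=
  {g | g ∈ PadG E V₀ h ∧ g w₀ = w₀}

/-- The anisotropic kernel `V_{an,0}`: the orthogonal complement of the hyperbolic
space `⊕ᵢ (Euᵢ ⊕ Eu₋ᵢ)`, where `u±ᵢ = w_{2i−2} ± w_{2i−1}` for `1 ≤ i ≤ r₀ = ⌊(l+1)/2⌋`. -/
def PadVan (h : V₀ → V₀ → E) (l : ℕ) (w : ℕ → V₀) : Set V₀ :=
  {v | ∀ i : ℕ, 1 ≤ i → i ≤ (l + 1) / 2 →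
    h v (w (2 * i - 2) + w (2 * i - 1)) = 0 ∧ h v (w (2 * i - 2) - w (2 * i - 1)) = 0}

/-- `R_{an,0} = {v ∈ V_{an,0} : val_E h(v,v) ≥ val_E ν₀ − 1}`. -/
def PadRan (h : V₀ → V₀ → E) (l : ℕ) (w : ℕ → V₀) (valE : E → ℤ) (ν₀ : E) : Set V₀ :=
  {v | v ∈ PadVan E V₀ h l w ∧ (v = 0 ∨ valE ν₀ - 1 ≤ valE (h v v))}

/-- The lattice `R₀ = O_E u₁ + O_E u₋₁ + … + O_E u_{r₀} + O_E u₋_{r₀} + R_{an,0}`. -/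
def PadR0 (h : V₀ → V₀ → E) (l : ℕ) (w : ℕ → V₀) (valE : E → ℤ) (ν₀ : E) : Set V₀ :=
  {v | ∃ (a b : ℕ → E) (x : V₀), x ∈ PadRan E V₀ h l w valE ν₀ ∧
    (∀ i, ‖a i‖ ≤ 1) ∧ (∀ i, ‖b i‖ ≤ 1) ∧
    v = (∑ i ∈ Finset.Icc 1 ((l + 1) / 2), a i • (w (2 * i - 2) + w (2 * i - 1))) +
      (∑ i ∈ Finset.Icc 1 ((l + 1) / 2), b i • (w (2 * i - 2) - w (2 * i - 1))) + x}

end PadSetup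

/-!
If `h x x = h y y` and `h x (x - y) ≠ 0`, the quasi-reflection along `x - y` is an isometry taking
`x` to `y`, and its norm is locally bounded in `(x, y)`. Since `h x (x - y)` may vanish, one passes
through an intermediate vector `z` depending continuously on `x` with `h z z = h x x`: `z = ω • x`
with `ω * σ ω = 1` if `x` is anisotropic, and `z = e + (h x x / 2) • f` for a hyperbolic pair
`(e, f)` if `x` is isotropic. Hence every pair of nonzero vectors `(x₀, y₀)` with
`h x₀ x₀ = h y₀ y₀` has a neighbourhood on which conjugating isometries of bounded norm exist, and
by homogeneity and compactness of an annulus one bound serves all pairs of comparable norms. The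
lattice `R₀` is a bounded neighbourhood of zero, so vectors of the same `R₀`-valuation have
comparable norms.
-/

open Filter Topology

section Algebra

variable {E V : Type*} [Field E] [AddCommGroup V] [Module E V] {σ : E →+* E}

lemma exists_map_eq_neg_self (hσ : Function.Involutive σ) (hσ' : ∃ a, σ a ≠ a) :
    ∃ s : E, s ≠ 0 ∧ σ s = -s := by
  obtain ⟨a, ha⟩ := hσ'
  exact ⟨a - σ a, sub_ne_zero.2 ha.symm, by rw [map_sub, hσ, neg_sub]⟩

lemma exists_map_mul_self_eq_one [NeZero (2 : E)] (hσ : Function.Involutive σ)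
    (hσ' : ∃ a, σ a ≠ a) : ∃ ε : E, σ ε * ε = 1 ∧ ε ≠ 1 ∧ ε ≠ -1 := by
  obtain ⟨s, hs, hσs⟩ := exists_map_eq_neg_self hσ hσ'
  have two_ne : (2 : E) ≠ 0 := two_ne_zero
  have hadd : 1 + s ≠ 0 := fun h0 => two_ne <| by
    have h1 := congrArg σ h0
    rw [map_add, map_one, hσs, map_zero] at h1
    linear_combination h0 + h1
  have hsub : 1 - s ≠ 0 := fun h0 => hadd <| (map_eq_zero σ).1 <| by
    rwa [map_add, map_one, hσs, ← sub_eq_add_neg]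
  refine ⟨(1 - s) / (1 + s), ?_, fun h => ?_, fun h => ?_⟩
  · rw [map_div₀, map_sub, map_add, map_one, hσs, ← sub_eq_add_neg, sub_neg_eq_add,
      div_mul_div_cancel₀ hsub, div_self hadd]
  · rw [div_eq_one_iff_eq hadd] at h
    exact mul_ne_zero two_ne hs (by linear_combination -h)
  · rw [div_eq_iff hadd] at h
    exact two_ne (by linear_combination h)

lemma exists_map_mul_self_eq_one_and_mul_ne [NeZero (2 : E)] (hσ : Function.Involutive σ)
    (hσ' : ∃ a, σ a ≠ a) (b : E) {m : E} (hm : m ≠ 0) :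
    ∃ ω : E, σ ω * ω = 1 ∧ ω ≠ 1 ∧ ω * b ≠ m := by
  obtain ⟨ε, hε, hε1, hε2⟩ := exists_map_mul_self_eq_one hσ hσ'
  by_cases hb : -1 * b = m
  · refine ⟨ε, hε, hε1, fun h => hε2 ?_⟩
    have hb0 : b ≠ 0 := fun h0 => hm (by rw [← hb, h0, mul_zero])
    exact mul_right_cancel₀ hb0 (h.trans hb.symm)
  · refine ⟨-1, by simp, fun h => ?_, hb⟩
    exact two_ne_zero (α := E) (by linear_combination -h)

variable {B : V →ₛₗ[σ] V →ₗ[E] E}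

/-- Here `x ↦ x - c⁻¹ B(s, x) s` is the quasi-reflection along `s` with parameter `c`. -/
lemma apply_preReflection_preReflection (hB : B.IsSymm) {s : V} {c : E} (hc : c ≠ 0)
    (hcs : c + σ c = B s s) (x y : V) :
    B (Module.preReflection s (c⁻¹ • B s) x) (Module.preReflection s (c⁻¹ • B s) y) = B x y := by
  have hσc : σ c ≠ 0 := (map_ne_zero σ).2 hc
  simp only [Module.preReflection_apply, LinearMap.smul_apply, smul_eq_mul, map_sub,
    LinearMap.sub_apply, LinearMap.map_smulₛₗ, map_mul, map_inv₀, hB.eq, ← hcs, RingHom.id_apply]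
  field_simp
  ring

lemma exists_isotropic_apply_eq_one [NeZero (2 : E)] (hB : B.IsSymm) {e g : V}
    (he : B e e = 0) (hg : B e g ≠ 0) : ∃ f, B f f = 0 ∧ B e f = 1 := by
  obtain ⟨f, hef⟩ : ∃ f, B e f = 1 := ⟨(B e g)⁻¹ • g, by simp [hg]⟩
  have hfe : B f e = 1 := by rw [← hB.eq, hef, map_one]
  have two_ne : (2 : E) ≠ 0 := two_ne_zero
  refine ⟨f - (B f f / 2) • e, ?_, by simp [he, hef]⟩
  simp only [map_sub, LinearMap.sub_apply, LinearMap.map_smulₛₗ, LinearMap.smul_apply,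
    RingHom.id_apply, smul_eq_mul, map_div₀, map_ofNat, hB.eq, he, hef, hfe]
  field_simp
  ring

lemma apply_self_add_div_two_smul [NeZero (2 : E)] (hB : B.IsSymm) {e f : V} (he : B e e = 0)
    (hf : B f f = 0) (hef : B e f = 1) {b : E} (hb : σ b = b) :
    B (e + (b / 2) • f) (e + (b / 2) • f) = b := by
  have hfe : B f e = 1 := by rw [← hB.eq, hef, map_one]
  have two_ne : (2 : E) ≠ 0 := two_ne_zero
  simp only [map_add, LinearMap.add_apply, LinearMap.map_smulₛₗ, LinearMap.smul_apply, smul_eq_mul,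
    RingHom.id_apply, map_div₀, map_ofNat, hb, he, hf, hef, hfe]
  field_simp
  ring

lemma exists_isotropic_apply_ne_zero_apply_ne_zero (hσ : Function.Involutive σ)
    (hσ' : ∃ a, σ a ≠ a) (hB : B.IsSymm) {x y e₁ e₂ : V} (he₁ : B e₁ e₁ = 0)
    (he₂ : B e₂ e₂ = 0) (hx : B x e₁ ≠ 0) (hy : B y e₂ ≠ 0) :
    ∃ e, B e e = 0 ∧ B x e ≠ 0 ∧ B y e ≠ 0 := by
  by_cases hy₁ : B y e₁ = 0
  swap
  · exact ⟨e₁, he₁, hx, hy₁⟩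
  by_cases hx₂ : B x e₂ = 0
  swap
  · exact ⟨e₂, he₂, hx₂, hy⟩
  obtain ⟨t, ht, htσ⟩ : ∃ t : E, t ≠ 0 ∧ t * B e₁ e₂ + σ t * B e₂ e₁ = 0 := by
    by_cases h₂₁ : B e₂ e₁ = 0
    · exact ⟨1, one_ne_zero, by simp [h₂₁, hB.eq_iff.1 h₂₁]⟩
    · obtain ⟨s, hs, hσs⟩ := exists_map_eq_neg_self hσ hσ'
      refine ⟨s * B e₂ e₁, mul_ne_zero hs h₂₁, ?_⟩
      rw [map_mul, hσs, hB.eq]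
      ring
  refine ⟨e₁ + t • e₂, ?_, by simpa [hx₂] using hx, by simpa [hy₁, ht] using hy⟩
  simpa [he₁, he₂, mul_comm] using htσ

lemma apply_sub_sum_div_smul_eq_zero {ι : Type*} {s : Finset ι} {w : ι → V}
    (horth : (s : Set ι).Pairwise fun i j => B (w i) (w j) = 0)
    (hw : ∀ i ∈ s, B (w i) (w i) ≠ 0) (v : V) {j : ι} (hj : j ∈ s) :
    B (w j) (v - ∑ i ∈ s, (B (w i) v / B (w i) (w i)) • w i) = 0 := by
  have hsum : ∑ i ∈ s, B (w j) ((B (w i) v / B (w i) (w i)) • w i) = B (w j) v := by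
    rw [Finset.sum_eq_single_of_mem j hj fun i hi hij => by
        rw [map_smul, horth hj hi hij.symm, smul_zero],
      map_smul, smul_eq_mul, div_mul_cancel₀ _ (hw j hj)]
  rw [map_sub, map_sum, hsum, sub_self]

lemma sum_range_two_mul_smul_eq [NeZero (2 : E)] (c : ℕ → E) (w : ℕ → V) (r : ℕ) :
    ∑ k ∈ Finset.range (2 * r), c k • w k =
      ∑ i ∈ Finset.Icc 1 r,
        ((c (2 * i - 2) + c (2 * i - 1)) / 2) • (w (2 * i - 2) + w (2 * i - 1)) +
      ∑ i ∈ Finset.Icc 1 r,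
        ((c (2 * i - 2) - c (2 * i - 1)) / 2) • (w (2 * i - 2) - w (2 * i - 1)) := by
  have two_ne : (2 : E) ≠ 0 := two_ne_zero
  have hpair (a b : E) (x y : V) :
      ((a + b) / 2) • (x + y) + ((a - b) / 2) • (x - y) = a • x + b • y := by
    match_scalars <;> field_simp <;> ring
  rw [← Finset.sum_add_distrib, Finset.sum_congr rfl fun i _ => hpair _ _ _ _]
  induction r with
  | zero => simp
  | succ r ih =>
    rw [Finset.sum_Icc_succ_top (by omega), ← ih, Nat.mul_succ, Finset.sum_range_succ,
      Finset.sum_range_succ, add_assoc]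
    rfl

end Algebra

lemma exists_forall_of_isCompact_of_eventually {X ι : Type*} [TopologicalSpace X] [Preorder ι]
    [IsDirectedOrder ι] [Nonempty ι] {K : Set X} (hK : IsCompact K) {P : ι → X → Prop}
    (hP : Monotone P)
    (hloc : ∀ x ∈ K, ∃ M, ∀ᶠ y in 𝓝 x, P M y) : ∃ M, ∀ x ∈ K, P M x := by
  obtain ⟨M, hM⟩ := hK.elim_directed_cover (fun M => interior {y | P M y})
    (fun _ => isOpen_interior)
    (fun x hx => Set.mem_iUnion.2 ((hloc x hx).imp fun _ => mem_interior_iff_mem_nhds.2))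
    (Monotone.directed_le fun _ _ hMN => interior_mono fun y => hP hMN y)
  exact ⟨M, fun x hx => interior_subset (hM hx)⟩

section Isometries

variable {E V : Type*} [NontriviallyNormedField E] [NormedAddCommGroup V] [NormedSpace E V]
  {σ : E →+* E} {B : V →SL[σ] V →L[E] E}

variable (B) in
/-- The isometries of the sesquilinear form `B` of operator norm at most `M`; these sets serve as
the compact subsets of the unitary group. -/
def boundedIsometries (M : ℝ) : Set (V →L[E] V) :=
  {γ | (∀ x y, B (γ x) (γ y) = B x y) ∧ ‖γ‖ ≤ M}

variable (B) in
lemma boundedIsometries_mono : Monotone (boundedIsometries B) :=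
  fun _ _ hMN _ hγ => ⟨hγ.1, hγ.2.trans hMN⟩

lemma comp_mem_boundedIsometries {M N : ℝ} {γ δ : V →L[E] V} (hγ : γ ∈ boundedIsometries B M)
    (hδ : δ ∈ boundedIsometries B N) : γ.comp δ ∈ boundedIsometries B (M * N) :=
  ⟨fun x y => (hγ.1 _ _).trans (hδ.1 x y), (γ.opNorm_comp_le δ).trans <|
    mul_le_mul hγ.2 hδ.2 (norm_nonneg _) ((norm_nonneg _).trans hγ.2)⟩

variable (B) in
lemma isCompact_boundedIsometries [ProperSpace (V →L[E] V)] (M : ℝ) :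
    IsCompact (boundedIsometries B M) := by
  have hclosed : IsClosed {γ : V →L[E] V | ∀ x y, B (γ x) (γ y) = B x y} := by
    simp only [Set.ofPred_forall]
    exact isClosed_iInter fun x => isClosed_iInter fun y =>
      isClosed_eq (by fun_prop) continuous_const
  have hinter : boundedIsometries B M =
      {γ | ∀ x y, B (γ x) (γ y) = B x y} ∩ Metric.closedBall 0 M := by
    ext γ
    exact and_congr_right fun _ => mem_closedBall_zero_iff.symm
  exact hinter ▸ (isCompact_closedBall (0 : V →L[E] V) M).inter_left hclosed

lemma bijective_of_mem_boundedIsometries [FiniteDimensional E V]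
    (hnd : B.toLinearMap₁₂.SeparatingRight) {M : ℝ} {γ : V →L[E] V}
    (hγ : γ ∈ boundedIsometries B M) : Function.Bijective γ := by
  have hinj : Function.Injective (γ : V →ₗ[E] V) :=
    (injective_iff_map_eq_zero _).2 fun u hu => hnd u fun v => by
      have hγu : γ u = 0 := hu
      rw [ContinuousLinearMap.toLinearMap₁₂_apply_apply_apply, ← hγ.1, hγu, map_zero]
  exact ⟨hinj, LinearMap.surjective_of_injective hinj⟩

/-- The isometry is the quasi-reflection along `x - y`. -/
lemma exists_mem_boundedIsometries_of_apply_sub_ne_zero (hB : B.toLinearMap₁₂.IsSymm) {x y : V}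
    (hxy : B x x = B y y) (hne : B (x - y) x ≠ 0) :
    ∃ γ ∈ boundedIsometries B (1 + ‖(B (x - y) x)⁻¹ • B (x - y)‖ * ‖x - y‖), γ x = y := by
  have hsymm (u v : V) : σ (B u v) = B v u := hB.eq u v
  have hparam : B (x - y) x + σ (B (x - y) x) = B (x - y) (x - y) := by
    simp only [map_sub, sub_apply, hsymm, hxy]
    ring
  refine ⟨.id E V - ((B (x - y) x)⁻¹ • B (x - y)).smulRight (x - y),
    ⟨apply_preReflection_preReflection hB hne hparam, ?_⟩, ?_⟩
  · refine (norm_sub_le _ _).trans (add_le_add ContinuousLinearMap.norm_id_le ?_)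
    rw [ContinuousLinearMap.norm_smulRight_apply]
  · change x - ((B (x - y) x)⁻¹ * B (x - y) x) • (x - y) = y
    rw [inv_mul_cancel₀ hne, one_smul, sub_sub_cancel]

end Isometries

section LocalTransitivity

variable {E V : Type*} [NontriviallyNormedField E] [NormedAddCommGroup V] [NormedSpace E V]
  {σ : E →+* E} {B : V →SL[σ] V →L[E] E} {x₀ y₀ : V}

variable (B) in
/-- Near `(x₀, y₀)`, any two vectors with the same value of the hermitian form `B` are conjugate
under isometries of uniformly bounded operator norm. -/
def BoundedlyConjNear (x₀ y₀ : V) : Prop :=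
  ∃ M, ∀ᶠ p : V × V in 𝓝 (x₀, y₀),
    B p.1 p.1 = B p.2 p.2 → ∃ γ ∈ boundedIsometries B M, γ p.1 = p.2

lemma BoundedlyConjNear.of_apply_sub_ne_zero (hB : B.toLinearMap₁₂.IsSymm)
    (hne : B (x₀ - y₀) x₀ ≠ 0) : BoundedlyConjNear B x₀ y₀ := by
  let bound (p : V × V) : ℝ := 1 + ‖(B (p.1 - p.2) p.1)⁻¹ • B (p.1 - p.2)‖ * ‖p.1 - p.2‖
  have hcont : Continuous fun p : V × V => B (p.1 - p.2) p.1 := by fun_prop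
  have hbound : ContinuousAt bound (x₀, y₀) := by
    have hinv : ContinuousAt (fun p : V × V => (B (p.1 - p.2) p.1)⁻¹) (x₀, y₀) :=
      hcont.continuousAt.inv₀ hne
    exact continuousAt_const.add ((hinv.smul (by fun_prop)).norm.mul (by fun_prop))
  refine ⟨bound (x₀, y₀) + 1, ?_⟩
  filter_upwards [hcont.continuousAt.eventually_ne hne,
    hbound.eventually_lt_const (lt_add_one _)] with p hp hpM hpp
  obtain ⟨γ, hγ, hγp⟩ := exists_mem_boundedIsometries_of_apply_sub_ne_zero hB hpp hp
  exact ⟨γ, boundedIsometries_mono B hpM.le hγ, hγp⟩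

lemma BoundedlyConjNear.trans {z : V → V} (hz : Continuous z)
    (hBz : ∀ x, B (z x) (z x) = B x x) (h₁ : BoundedlyConjNear B x₀ (z x₀))
    (h₂ : BoundedlyConjNear B (z x₀) y₀) : BoundedlyConjNear B x₀ y₀ := by
  obtain ⟨M, hM⟩ := h₁
  obtain ⟨N, hN⟩ := h₂
  have tendsto₁ : Tendsto (fun p : V × V => (p.1, z p.1)) (𝓝 (x₀, y₀)) (𝓝 (x₀, z x₀)) :=
    Continuous.tendsto (by fun_prop) (x₀, y₀)
  have tendsto₂ : Tendsto (fun p : V × V => (z p.1, p.2)) (𝓝 (x₀, y₀)) (𝓝 (z x₀, y₀)) :=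
    Continuous.tendsto (by fun_prop) (x₀, y₀)
  refine ⟨N * M, ?_⟩
  filter_upwards [tendsto₁.eventually hM, tendsto₂.eventually hN] with p hpM hpN hp
  obtain ⟨γ, hγ, hγp⟩ := hpM (hBz p.1).symm
  obtain ⟨δ, hδ, hδp⟩ := hpN ((hBz p.1).trans hp)
  exact ⟨δ.comp γ, comp_mem_boundedIsometries hδ hγ, by
    rw [ContinuousLinearMap.comp_apply, hγp, hδp]⟩

variable [NeZero (2 : E)]

lemma boundedlyConjNear_of_anisotropic (hσ : Function.Involutive σ) (hσ' : ∃ a, σ a ≠ a)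
    (hB : B.toLinearMap₁₂.IsSymm) (hx₀ : B x₀ x₀ ≠ 0) : BoundedlyConjNear B x₀ y₀ := by
  obtain ⟨ω, hω, hω1, hωy⟩ := exists_map_mul_self_eq_one_and_mul_ne hσ hσ' (B y₀ x₀) hx₀
  have hBω (x : V) : B (ω • x) (ω • x) = B x x := by
    rw [map_smul, map_smulₛₗ, smul_apply, smul_eq_mul, smul_eq_mul,
      ← mul_assoc, mul_comm ω, hω, one_mul]
  refine .trans (z := fun x => ω • x) (by fun_prop) hBω (.of_apply_sub_ne_zero hB ?_)
    (.of_apply_sub_ne_zero hB ?_)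
  · have hσω : 1 - σ ω ≠ 0 := by
      rw [← map_one σ, ← map_sub]
      exact (map_ne_zero σ).2 (sub_ne_zero.2 hω1.symm)
    rw [map_sub, sub_apply, map_smulₛₗ, smul_apply, smul_eq_mul, ← one_sub_mul]
    exact mul_ne_zero hσω hx₀
  · rw [map_sub, sub_apply, hBω, map_smul, smul_eq_mul]
    exact sub_ne_zero.2 hωy.symm

lemma boundedlyConjNear_of_isotropic (hσ : Function.Involutive σ) (hσ' : ∃ a, σ a ≠ a)
    (hB : B.toLinearMap₁₂.IsSymm) (hnd : B.toLinearMap₁₂.SeparatingRight) (hx₀ : x₀ ≠ 0)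
    (hy₀ : y₀ ≠ 0) (hBx₀ : B x₀ x₀ = 0) (hBy₀ : B y₀ y₀ = 0) : BoundedlyConjNear B x₀ y₀ := by
  have exists_apply_ne_zero {x : V} (hx : x ≠ 0) : ∃ g, B x g ≠ 0 := by
    by_contra! h
    exact hx (hnd x fun g => hB.eq_iff.1 (h g))
  have exists_dual {x : V} (hx : x ≠ 0) (hBx : B x x = 0) : ∃ f, B f f = 0 ∧ B x f = 1 :=
    let ⟨_, hg⟩ := exists_apply_ne_zero hx
    exists_isotropic_apply_eq_one hB hBx hg
  obtain ⟨f₁, hf₁, hxf₁⟩ := exists_dual hx₀ hBx₀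
  obtain ⟨f₂, hf₂, hyf₂⟩ := exists_dual hy₀ hBy₀
  obtain ⟨e, he, hxe, hye⟩ : ∃ e, B e e = 0 ∧ B x₀ e ≠ 0 ∧ B y₀ e ≠ 0 :=
    exists_isotropic_apply_ne_zero_apply_ne_zero hσ hσ' hB hf₁ hf₂
      (hxf₁.trans_ne one_ne_zero) (hyf₂.trans_ne one_ne_zero)
  obtain ⟨f, hf, hef⟩ := exists_dual (x := e) (fun h0 => hxe (by rw [h0, map_zero])) he
  let z (x : V) : V := e + (B x x / 2) • f
  have hz₀ : z x₀ = e := by simp [z, hBx₀]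
  have hBz (x : V) : B (z x) (z x) = B x x :=
    apply_self_add_div_two_smul hB he hf hef (hB.eq x x)
  refine .trans (z := z) (by fun_prop) hBz (.of_apply_sub_ne_zero hB ?_)
    (.of_apply_sub_ne_zero hB ?_)
  · rw [hz₀, map_sub, sub_apply, hBx₀, zero_sub, neg_ne_zero]
    exact fun h => hxe (hB.eq_iff.1 h)
  · rwa [hz₀, map_sub, sub_apply, he, zero_sub, neg_ne_zero]

lemma boundedlyConjNear_of_apply_self_eq (hσ : Function.Involutive σ) (hσ' : ∃ a, σ a ≠ a)
    (hB : B.toLinearMap₁₂.IsSymm) (hnd : B.toLinearMap₁₂.SeparatingRight) (hx₀ : x₀ ≠ 0)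
    (hy₀ : y₀ ≠ 0) (hxy : B x₀ x₀ = B y₀ y₀) : BoundedlyConjNear B x₀ y₀ := by
  by_cases hBx₀ : B x₀ x₀ = 0
  · exact boundedlyConjNear_of_isotropic hσ hσ' hB hnd hx₀ hy₀ hBx₀ (hxy ▸ hBx₀)
  · exact boundedlyConjNear_of_anisotropic hσ hσ' hB hBx₀

end LocalTransitivity

section Homogeneity

variable {E V : Type*} [NontriviallyNormedField E] [NormedAddCommGroup V] [NormedSpace E V]
  [ProperSpace V]

lemma isCompact_setOf_norm_le_norm_le (δ κ : ℝ) :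
    IsCompact {p : V × V | δ ≤ ‖p.1‖ ∧ ‖p.1‖ ≤ 1 ∧ ‖p.1‖ ≤ κ * ‖p.2‖ ∧ ‖p.2‖ ≤ κ * ‖p.1‖} := by
  refine ((isCompact_closedBall (0 : V) 1).prod (isCompact_closedBall 0 |κ|)).of_isClosed_subset
    ?_ ?_
  · simp only [Set.ofPred_and]
    exact (isClosed_le (by fun_prop) (by fun_prop)).inter <|
      (isClosed_le (by fun_prop) (by fun_prop)).inter <|
      (isClosed_le (by fun_prop) (by fun_prop)).inter (isClosed_le (by fun_prop) (by fun_prop))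
  · rintro p ⟨-, hp₁, -, hp₂⟩
    refine ⟨mem_closedBall_zero_iff.2 hp₁, mem_closedBall_zero_iff.2 ?_⟩
    calc ‖p.2‖ ≤ |κ| * ‖p.1‖ := hp₂.trans (by gcongr; exact le_abs_self κ)
      _ ≤ |κ| := mul_le_of_le_one_right (abs_nonneg κ) hp₁

variable {σ : E →+* E} {B : V →SL[σ] V →L[E] E}

/-- A quantitative form of Witt's theorem for vectors. -/
theorem exists_forall_exists_mem_boundedIsometries [NeZero (2 : E)]
    (hσ : Function.Involutive σ) (hσ' : ∃ a, σ a ≠ a) (hB : B.toLinearMap₁₂.IsSymm)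
    (hnd : B.toLinearMap₁₂.SeparatingRight) (κ : ℝ) :
    ∃ M, ∀ x y : V, x ≠ 0 → B x x = B y y → ‖x‖ ≤ κ * ‖y‖ → ‖y‖ ≤ κ * ‖x‖ →
      ∃ γ ∈ boundedIsometries B M, γ x = y := by
  obtain ⟨a, ha⟩ := NormedField.exists_one_lt_norm E
  let K : Set (V × V) := {p | 1 / ‖a‖ ≤ ‖p.1‖ ∧ ‖p.1‖ ≤ 1 ∧ ‖p.1‖ ≤ κ * ‖p.2‖ ∧ ‖p.2‖ ≤ κ * ‖p.1‖}
  have hK : IsCompact (K ∩ {p | B p.1 p.1 = B p.2 p.2}) :=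
    (isCompact_setOf_norm_le_norm_le _ κ).inter_right
      (isClosed_eq (by fun_prop) (by fun_prop))
  have hlocal : ∀ p ∈ K ∩ {p | B p.1 p.1 = B p.2 p.2}, BoundedlyConjNear B p.1 p.2 := by
    rintro ⟨x, y⟩ ⟨⟨hx, -, hxy, -⟩, hBxy⟩
    have hx_pos : 0 < ‖x‖ := lt_of_lt_of_le (by positivity) hx
    refine boundedlyConjNear_of_apply_self_eq hσ hσ' hB hnd (norm_pos_iff.1 hx_pos) ?_ hBxy
    rintro rfl
    exact hx_pos.not_ge (by simpa using hxy)
  obtain ⟨M, hM⟩ := exists_forall_of_isCompact_of_eventually hK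
    (P := fun M p => B p.1 p.1 = B p.2 p.2 → ∃ γ ∈ boundedIsometries B M, γ p.1 = p.2)
    (fun M N hMN p hp hpp => (hp hpp).imp fun γ hγ => ⟨boundedIsometries_mono B hMN hγ.1, hγ.2⟩)
    hlocal
  refine ⟨M, fun x y hx hxy hle hge => ?_⟩
  obtain ⟨d, hd, hd_lt, hd_ge, -⟩ := rescale_to_shell ha one_pos hx
  have hB_smul : B (d • x) (d • x) = B (d • y) (d • y) := by simp [hxy]
  have norm_smul_le {u v : V} (huv : ‖u‖ ≤ κ * ‖v‖) : ‖d • u‖ ≤ κ * ‖d • v‖ := by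
    rw [norm_smul, norm_smul, mul_left_comm]
    gcongr
  obtain ⟨γ, hγ, hγx⟩ := hM (d • x, d • y)
    ⟨⟨hd_ge, hd_lt.le, norm_smul_le hle, norm_smul_le hge⟩, hB_smul⟩ hB_smul
  exact ⟨γ, hγ, smul_right_injective V hd (by simpa using hγx)⟩

end Homogeneity

lemma exists_norm_le_mul_of_forall_zpow_smul {E V : Type*} [NontriviallyNormedField E]
    [NormedAddCommGroup V] [NormedSpace E V] {π : E} (hπ0 : π ≠ 0) (hπ1 : ‖π‖ < 1) {R : Set V}
    (hR : R ∈ 𝓝 0) (hR_bdd : Bornology.IsBounded R) :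
    ∃ κ, ∀ v v' : V, v ≠ 0 →
      (∀ n : ℤ, (∃ u ∈ R, v = π ^ n • u) → ∃ u ∈ R, v' = π ^ n • u) → ‖v'‖ ≤ κ * ‖v‖ := by
  obtain ⟨δ, hδ, hball⟩ := Metric.mem_nhds_iff.1 hR
  obtain ⟨C, hRC⟩ := hR_bdd.exists_norm_le
  have hπ_inv : 1 < ‖π⁻¹‖ := by
    rw [norm_inv]
    exact (one_lt_inv₀ (norm_pos_iff.2 hπ0)).2 hπ1
  refine ⟨δ⁻¹ * ‖π⁻¹‖ * C, fun v v' hv himp => ?_⟩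
  obtain ⟨n, -, hn_lt, -, hn_le⟩ := rescale_to_shell_zpow hπ_inv hδ hv
  obtain ⟨u, hu, rfl⟩ := himp n
    ⟨π⁻¹ ^ n • v, hball (mem_ball_zero_iff.2 hn_lt), by
      rw [inv_zpow, smul_inv_smul₀ (zpow_ne_zero n hπ0)]⟩
  calc ‖π ^ n • u‖ = ‖π⁻¹ ^ n‖⁻¹ * ‖u‖ := by rw [norm_smul, inv_zpow, norm_inv, inv_inv]
    _ ≤ δ⁻¹ * ‖π⁻¹‖ * ‖v‖ * C := by gcongr; exact hRC u hu
    _ = δ⁻¹ * ‖π⁻¹‖ * C * ‖v‖ := by ring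

section HermitianForms

variable {E V : Type*} [NontriviallyNormedField E] [NormedAddCommGroup V] [NormedSpace E V]
  {σ : E →+* E} [RingHomIsometric σ]

lemma exists_continuousLinearMap₂_apply_eq [CompleteSpace E] [FiniteDimensional E V]
    {h : V → V → E} (haddl : ∀ u u' v, h (u + u') v = h u v + h u' v)
    (hsmull : ∀ (a : E) (u v : V), h (a • u) v = a * h u v)
    (hconj : ∀ u v, h v u = σ (h u v)) :
    ∃ B : V →SL[σ] V →L[E] E, ∀ u v, B v u = h u v := by
  let f : V →ₛₗ[σ] V →ₗ[E] E := LinearMap.mk₂'ₛₗ σ (RingHom.id E) (fun v u => h u v)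
    (fun v v' u => by rw [hconj, haddl, map_add, ← hconj, ← hconj])
    (fun a v u => by rw [hconj, hsmull, map_mul, ← hconj, smul_eq_mul])
    (fun v u u' => haddl u u' v) (fun a v u => hsmull a u v)
  let g (v : V) : V →L[E] E := LinearMap.toContinuousLinearMap (f v)
  have norm_swap (u v : V) : ‖g u v‖ = ‖g v u‖ :=
    (congrArg norm (hconj u v)).trans (RingHomIsometric.norm_map)
  let b := Module.finBasis E V
  obtain ⟨C, -, hgC⟩ := b.exists_opNorm_le (F := E)
  have hg (v : V) : ‖g v‖ ≤ C * ((∑ i, ‖g (b i)‖) * ‖v‖) := hgC (by positivity) fun i =>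
    calc ‖g v (b i)‖ = ‖g (b i) v‖ := norm_swap _ _
      _ ≤ ‖g (b i)‖ * ‖v‖ := (g (b i)).le_opNorm v
      _ ≤ (∑ i, ‖g (b i)‖) * ‖v‖ := by
        gcongr
        exact Finset.single_le_sum (f := fun i => ‖g (b i)‖) (fun _ _ => norm_nonneg _)
          (Finset.mem_univ i)
  refine ⟨f.mkContinuous₂ (C * ∑ i, ‖g (b i)‖) fun v u => ?_, fun u v => rfl⟩
  rw [mul_assoc C]
  exact (g v).le_of_opNorm_le (hg v) u

lemma exists_mul_norm_sq_le_norm_apply_self [ProperSpace V] {B : V →SL[σ] V →L[E] E}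
    {S : Submodule E V} (hS : IsClosed (S : Set V)) (han : ∀ v ∈ S, v ≠ 0 → B v v ≠ 0) :
    ∃ c : ℝ, 0 < c ∧ ∀ v ∈ S, c * ‖v‖ ^ 2 ≤ ‖B v v‖ := by
  obtain ⟨a, ha⟩ := NormedField.exists_one_lt_norm E
  have hcompact : IsCompact ((Metric.closedBall (0 : V) 1 \ Metric.ball 0 (1 / ‖a‖)) ∩ S) :=
    ((isCompact_closedBall _ _).diff Metric.isOpen_ball).inter_right hS
  have hcont : Continuous fun v => ‖B v v‖ := by fun_prop
  obtain ⟨c, hc, hc_le⟩ := hcompact.exists_forall_le' hcont.continuousOn (a := 0) (by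
    rintro v ⟨⟨-, hv⟩, hvS⟩
    refine norm_pos_iff.2 (han v hvS ?_)
    rintro rfl
    exact hv (Metric.mem_ball_self (by positivity)))
  refine ⟨c, hc, fun v hv => ?_⟩
  by_cases hv0 : v = 0
  · simp [hv0]
  obtain ⟨d, -, hd_lt, hd_ge, -⟩ := rescale_to_shell ha one_pos hv0
  have hcd : c ≤ ‖B (d • v) (d • v)‖ :=
    hc_le (d • v) ⟨⟨by simpa using hd_lt.le, by simpa using hd_ge⟩, S.smul_mem d hv⟩
  calc c * ‖v‖ ^ 2 ≤ ‖B (d • v) (d • v)‖ * ‖v‖ ^ 2 := by gcongr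
    _ = ‖d • v‖ ^ 2 * ‖B v v‖ := by
      simp only [map_smulₛₗ, smul_apply, norm_smul, RingHom.id_apply, RingHomIsometric.norm_map]
      ring
    _ ≤ ‖B v v‖ := mul_le_of_le_one_left (norm_nonneg _) (pow_le_one₀ (norm_nonneg _) hd_lt.le)

end HermitianForms

section Lattice

variable {E V : Type*} [NontriviallyNormedField E] [NormedAddCommGroup V] [NormedSpace E V]

lemma mem_padR0_of_forall_mem_Icc {h : V → V → E} {l : ℕ} {w : ℕ → V} {valE : E → ℤ} {ν₀ : E}
    {a b : ℕ → E} {x : V} (hx : x ∈ PadRan E V h l w valE ν₀)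
    (ha : ∀ i ∈ Finset.Icc 1 ((l + 1) / 2), ‖a i‖ ≤ 1)
    (hb : ∀ i ∈ Finset.Icc 1 ((l + 1) / 2), ‖b i‖ ≤ 1) :
    (∑ i ∈ Finset.Icc 1 ((l + 1) / 2), a i • (w (2 * i - 2) + w (2 * i - 1))) +
      (∑ i ∈ Finset.Icc 1 ((l + 1) / 2), b i • (w (2 * i - 2) - w (2 * i - 1))) + x ∈
      PadR0 E V h l w valE ν₀ := by
  let truncate (c : ℕ → E) (i : ℕ) : E := if i ∈ Finset.Icc 1 ((l + 1) / 2) then c i else 0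
  have norm_truncate_le {c : ℕ → E} (hc : ∀ i ∈ Finset.Icc 1 ((l + 1) / 2), ‖c i‖ ≤ 1) (i : ℕ) :
      ‖truncate c i‖ ≤ 1 := by
    by_cases hi : i ∈ Finset.Icc 1 ((l + 1) / 2)
    · simpa only [truncate, if_pos hi] using hc i hi
    · simp only [truncate, if_neg hi, norm_zero, zero_le_one]
  have sum_truncate (c : ℕ → E) (u : ℕ → V) :
      ∑ i ∈ Finset.Icc 1 ((l + 1) / 2), truncate c i • u i =
        ∑ i ∈ Finset.Icc 1 ((l + 1) / 2), c i • u i :=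
    Finset.sum_congr rfl fun i hi => by simp only [truncate, if_pos hi]
  exact ⟨truncate a, truncate b, x, hx, norm_truncate_le ha, norm_truncate_le hb, by
    rw [sum_truncate, sum_truncate]⟩

variable {σ : E →+* E} {B : V →SL[σ] V →L[E] E}

variable (B) in
/-- The anisotropic kernel `PadVan` of the hermitian form `h u v = B v u`, as a subspace. -/
def padVanSubmodule (l : ℕ) (w : ℕ → V) : Submodule E V where
  carrier := PadVan E V (fun u v => B v u) l w
  add_mem' hu hv i hi hil := by
    simp only [map_add (B _), hu i hi hil, hv i hi hil, add_zero, and_self]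
  zero_mem' i _ _ := by simp only [map_zero, and_self]
  smul_mem' a u hu i hi hil := by simp only [map_smul, hu i hi hil, smul_zero, and_self]

variable {l : ℕ} {w : ℕ → V} {πE : E} {valE : E → ℤ} {ν₀ : E}

lemma mem_padRan_iff (hπ0 : πE ≠ 0) (hπ1 : ‖πE‖ < 1)
    (hval : ∀ x : E, x ≠ 0 → ‖x‖ = ‖πE‖ ^ valE x)
    (han : ∀ v ∈ padVanSubmodule B l w, v ≠ 0 → B v v ≠ 0) {v : V} :
    v ∈ PadRan E V (fun u v => B v u) l w valE ν₀ ↔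
      v ∈ padVanSubmodule B l w ∧ ‖B v v‖ ≤ ‖πE‖ ^ (valE ν₀ - 1) := by
  refine and_congr_right fun hv => ?_
  by_cases hv0 : v = 0
  · simp only [hv0, map_zero, norm_zero, true_or, true_iff]
    positivity
  · rw [hval _ (han v hv hv0), zpow_le_zpow_iff_right_of_lt_one₀ (norm_pos_iff.2 hπ0) hπ1]
    exact or_iff_right hv0

lemma isBounded_padRan [ProperSpace E] [FiniteDimensional E V] [RingHomIsometric σ] (hπ0 : πE ≠ 0)
    (hπ1 : ‖πE‖ < 1) (hval : ∀ x : E, x ≠ 0 → ‖x‖ = ‖πE‖ ^ valE x)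
    (han : ∀ v ∈ padVanSubmodule B l w, v ≠ 0 → B v v ≠ 0) :
    Bornology.IsBounded (PadRan E V (fun u v => B v u) l w valE ν₀) := by
  have : ProperSpace V := FiniteDimensional.proper E V
  obtain ⟨c, hc, hc_le⟩ := exists_mul_norm_sq_le_norm_apply_self
    (padVanSubmodule B l w).closed_of_finiteDimensional han
  refine isBounded_iff_forall_norm_le.2 ⟨√(‖πE‖ ^ (valE ν₀ - 1) / c), fun v hv => ?_⟩
  obtain ⟨hv, hBv⟩ := (mem_padRan_iff hπ0 hπ1 hval han).1 hv
  refine Real.le_sqrt_of_sq_le ?_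
  rw [le_div_iff₀' hc]
  exact (hc_le v hv).trans hBv

lemma isBounded_padR0 {h : V → V → E}
    (hRan : Bornology.IsBounded (PadRan E V h l w valE ν₀)) :
    Bornology.IsBounded (PadR0 E V h l w valE ν₀) := by
  obtain ⟨C, hC⟩ := isBounded_iff_forall_norm_le.1 hRan
  have norm_sum_le {a : ℕ → E} (ha : ∀ i, ‖a i‖ ≤ 1) (u : ℕ → V) (s : Finset ℕ) :
      ‖∑ i ∈ s, a i • u i‖ ≤ ∑ i ∈ s, ‖u i‖ :=
    norm_sum_le_of_le _ fun i _ => by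
      rw [norm_smul]
      exact mul_le_of_le_one_left (norm_nonneg _) (ha i)
  refine isBounded_iff_forall_norm_le.2 ⟨
    ∑ i ∈ Finset.Icc 1 ((l + 1) / 2), ‖w (2 * i - 2) + w (2 * i - 1)‖ +
      ∑ i ∈ Finset.Icc 1 ((l + 1) / 2), ‖w (2 * i - 2) - w (2 * i - 1)‖ + C, ?_⟩
  rintro _ ⟨a, b, x, hx, ha, hb, rfl⟩
  exact norm_add₃_le.trans
    (add_le_add_three (norm_sum_le ha _ _) (norm_sum_le hb _ _) (hC x hx))

lemma sub_sum_div_smul_mem_padVanSubmodule (horth : ∀ i ≤ l, ∀ j ≤ l, i ≠ j → B (w i) (w j) = 0)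
    (hw : ∀ i ≤ l, B (w i) (w i) ≠ 0) (v : V) :
    v - ∑ k ∈ Finset.range (2 * ((l + 1) / 2)), (B (w k) v / B (w k) (w k)) • w k ∈
      padVanSubmodule B l w := by
  have le_of_mem {k : ℕ} (hk : k ∈ Finset.range (2 * ((l + 1) / 2))) : k ≤ l := by
    rw [Finset.mem_range] at hk
    omega
  have apply_eq_zero {k : ℕ} (hk : k < 2 * ((l + 1) / 2)) := apply_sub_sum_div_smul_eq_zero
    (B := B.toLinearMap₁₂)
    (fun i hi j hj hij => horth i (le_of_mem hi) j (le_of_mem hj) hij)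
    (fun i hi => hw i (le_of_mem hi)) v (Finset.mem_range.2 hk)
  simp only [ContinuousLinearMap.toLinearMap₁₂_apply_apply_apply] at apply_eq_zero
  intro i hi hil
  simp only [map_add B, B.map_sub (w _), add_apply, sub_apply,
    apply_eq_zero (k := 2 * i - 2) (by omega), apply_eq_zero (k := 2 * i - 1) (by omega),
    add_zero, sub_zero, and_self]

lemma padR0_mem_nhds_zero [NeZero (2 : E)] (hπ0 : πE ≠ 0) (hπ1 : ‖πE‖ < 1)
    (hval : ∀ x : E, x ≠ 0 → ‖x‖ = ‖πE‖ ^ valE x)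
    (horth : ∀ i ≤ l, ∀ j ≤ l, i ≠ j → B (w i) (w j) = 0) (hw : ∀ i ≤ l, B (w i) (w i) ≠ 0)
    (han : ∀ v ∈ padVanSubmodule B l w, v ≠ 0 → B v v ≠ 0) :
    PadR0 E V (fun u v => B v u) l w valE ν₀ ∈ 𝓝 0 := by
  let c (v : V) (k : ℕ) : E := B (w k) v / B (w k) (w k)
  let x (v : V) : V := v - ∑ k ∈ Finset.range (2 * ((l + 1) / 2)), c v k • w k
  have eventually_norm_le {f : V → E} (hf : Continuous f) (hf0 : f 0 = 0) {ε : ℝ} (hε : 0 < ε) :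
      ∀ᶠ v in 𝓝 0, ‖f v‖ ≤ ε :=
    (hf.norm.tendsto' 0 0 (by rw [hf0, norm_zero])).eventually_le_const hε
  have eventually_add (i : ℕ) : ∀ᶠ v in 𝓝 0, ‖(c v (2 * i - 2) + c v (2 * i - 1)) / 2‖ ≤ 1 :=
    eventually_norm_le (by fun_prop) (by simp [c]) one_pos
  have eventually_sub (i : ℕ) : ∀ᶠ v in 𝓝 0, ‖(c v (2 * i - 2) - c v (2 * i - 1)) / 2‖ ≤ 1 :=
    eventually_norm_le (by fun_prop) (by simp [c]) one_pos
  have eventually_apply : ∀ᶠ v in 𝓝 0, ‖B (x v) (x v)‖ ≤ ‖πE‖ ^ (valE ν₀ - 1) :=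
    eventually_norm_le (by fun_prop) (by simp [x, c]) (zpow_pos (norm_pos_iff.2 hπ0) _)
  filter_upwards [(eventually_all_finset _).2 fun i _ => eventually_add i,
    (eventually_all_finset _).2 fun i _ => eventually_sub i, eventually_apply] with v ha hb hx
  have hxRan : x v ∈ PadRan E V (fun u v => B v u) l w valE ν₀ :=
    (mem_padRan_iff hπ0 hπ1 hval han).2 ⟨sub_sum_div_smul_mem_padVanSubmodule horth hw v, hx⟩
  have hmem := mem_padR0_of_forall_mem_Icc hxRan ha hb
  rwa [← sum_range_two_mul_smul_eq, add_sub_cancel] at hmem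

end Lattice

theorem stmt_9_general (E : Type*) [NontriviallyNormedField E] [ProperSpace E] [NeZero (2 : E)]
    (πE : E) (hπ0 : πE ≠ 0) (hπ1 : ‖πE‖ < 1)
    (valE : E → ℤ) (hval : ∀ x : E, x ≠ 0 → ‖x‖ = ‖πE‖ ^ valE x)
    (σ : E →+* E) (hσ2 : ∀ x : E, σ (σ x) = x) (hσnt : ∃ x : E, σ x ≠ x)
    (hσiso : ∀ x : E, ‖σ x‖ = ‖x‖)
    (V₀ : Type*) [NormedAddCommGroup V₀] [NormedSpace E V₀] [FiniteDimensional E V₀]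
    (h : V₀ → V₀ → E)
    (haddl : ∀ u u' v : V₀, h (u + u') v = h u v + h u' v)
    (hsmull : ∀ (a : E) (u v : V₀), h (a • u) v = a * h u v)
    (hconj : ∀ u v : V₀, h v u = σ (h u v))
    (ν₀ : E) (l : ℕ) (w : ℕ → V₀)
    (horth : ∀ i ≤ l, ∀ j ≤ l, i ≠ j → h (w i) (w j) = 0)
    (hw : ∀ i ≤ l, h (w i) (w i) ≠ 0)
    (han : ∀ v ∈ PadVan E V₀ h l w, v ≠ 0 → h v v ≠ 0) :
    ∃ C₁ : Set (V₀ →L[E] V₀), C₁ ⊆ PadG E V₀ h ∧ IsCompact C₁ ∧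
      ∀ v v' : V₀, v ≠ 0 → v' ≠ 0 → h v v = h v' v' →
        (∀ n : ℤ, (∃ u ∈ PadR0 E V₀ h l w valE ν₀, v = πE ^ n • u) ↔
          (∃ u ∈ PadR0 E V₀ h l w valE ν₀, v' = πE ^ n • u)) →
        ∃ γ ∈ C₁, γ v = v' := by
  have : RingHomIsometric σ := ⟨hσiso _⟩
  have : ProperSpace V₀ := FiniteDimensional.proper E V₀
  have : ProperSpace (V₀ →L[E] V₀) := FiniteDimensional.proper E _
  obtain ⟨B, hBh⟩ := exists_continuousLinearMap₂_apply_eq haddl hsmull hconj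
  obtain rfl : (fun u v => B v u) = h := funext₂ hBh
  have hB : B.toLinearMap₁₂.IsSymm := ⟨fun u v => (hconj v u).symm⟩
  have hnd : B.toLinearMap₁₂.SeparatingRight := fun u hu => by
    by_contra hu0
    exact han u (fun _ _ _ => ⟨hu _, hu _⟩) hu0 (hu u)
  obtain ⟨κ, hκ⟩ := exists_norm_le_mul_of_forall_zpow_smul hπ0 hπ1
    (padR0_mem_nhds_zero (ν₀ := ν₀) hπ0 hπ1 hval
      (fun i hi j hj hij => horth j hj i hi hij.symm) hw han)
    (isBounded_padR0 (isBounded_padRan hπ0 hπ1 hval han))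
  obtain ⟨M, hM⟩ := exists_forall_exists_mem_boundedIsometries hσ2 hσnt hB hnd κ
  refine ⟨boundedIsometries B M,
    fun γ hγ => ⟨bijective_of_mem_boundedIsometries hnd hγ, fun u v => hγ.1 v u⟩,
    isCompact_boundedIsometries B M, fun v v' hv hv' hvv' hiff => ?_⟩
  exact hM v v' hv hvv' (hκ v' v hv' fun n => (hiff n).2) (hκ v v' hv fun n => (hiff n).1)

/-- there is a compact subset `C₁` of `G₀` such that any two nonzero vectors
`v, v'` with `h(v,v) = h(v',v') = ν₀` and `val_{R₀}(v) = val_{R₀}(v')` (encoded as: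
`v ∈ πE^n R₀ ↔ v' ∈ πE^n R₀` for every `n : ℤ`) are conjugate under `C₁`. -/
theorem stmt_9 (E : Type*) [NontriviallyNormedField E] [CompleteSpace E] [CharZero E]
    (hna : ∀ x y : E, ‖x + y‖ ≤ max ‖x‖ ‖y‖)
    (hloc : IsCompact (Metric.closedBall (0 : E) 1))
    (πE : E) (hπ0 : πE ≠ 0) (hπ1 : ‖πE‖ < 1)
    (valE : E → ℤ) (hval : ∀ x : E, x ≠ 0 → ‖x‖ = ‖πE‖ ^ valE x) (hvalπ : valE πE = 1)
    (σ : E ≃+* E) (hσ2 : ∀ x : E, σ (σ x) = x) (hσnt : ∃ x : E, σ x ≠ x)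
    (hσiso : ∀ x : E, ‖σ x‖ = ‖x‖)
    (V₀ : Type*) [NormedAddCommGroup V₀] [NormedSpace E V₀] [FiniteDimensional E V₀]
    (h : V₀ → V₀ → E)
    (haddl : ∀ u u' v : V₀, h (u + u') v = h u v + h u' v)
    (hsmull : ∀ (a : E) (u v : V₀), h (a • u) v = a * h u v)
    (hconj : ∀ u v : V₀, h v u = σ (h u v))
    (hnd : ∀ u : V₀, (∀ v : V₀, h u v = 0) → u = 0)
    (ν₀ : E) (hν0 : ν₀ ≠ 0) (hνF : σ ν₀ = ν₀)
    (l : ℕ) (w : ℕ → V₀)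
    (horth : ∀ i ≤ l, ∀ j ≤ l, i ≠ j → h (w i) (w j) = 0)
    (hvalw : ∀ i ≤ l, h (w i) (w i) = (-1 : E) ^ i * ν₀)
    (han : ∀ v ∈ PadVan E V₀ h l w, v ≠ 0 → h v v ≠ 0) :
    ∃ C₁ : Set (V₀ →L[E] V₀), C₁ ⊆ PadG E V₀ h ∧ IsCompact C₁ ∧
      ∀ v v' : V₀, v ≠ 0 → v' ≠ 0 → h v v = ν₀ → h v' v' = ν₀ →
        (∀ n : ℤ, (∃ u ∈ PadR0 E V₀ h l w valE ν₀, v = πE ^ n • u) ↔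
          (∃ u ∈ PadR0 E V₀ h l w valE ν₀, v' = πE ^ n • u)) →
        ∃ γ ∈ C₁, γ v = v' := by
  have : LocallyCompactSpace E := hloc.locallyCompactSpace_of_mem_nhds_of_addGroup
    (Metric.closedBall_mem_nhds 0 one_pos)
  have : ProperSpace E := .of_locallyCompactSpace E
  obtain ⟨C₁, hC₁, hcompact, hconj₁⟩ := stmt_9_general E πE hπ0 hπ1 valE hval (σ : E →+* E) hσ2
    hσnt hσiso V₀ h haddl hsmull hconj ν₀ l w horth
    (fun i hi => by simp [hvalw i hi, hν0]) han
  exact ⟨C₁, hC₁, hcompact, fun v v' hv hv' hvν hvν' => hconj₁ v v' hv hv' (hvν.trans hvν'.symm)⟩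
end
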